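/- Under the setup of the decomposition lemma, for every n and every m ≥ n+2, the set (Γ_{n+1} ∩ D_m) \ (D_{n+1}Γ_{n+2} ∪ ⋯ ∪ D_{m-1}Γ_m) has cardinality at least (|D_m|/|D_{n+1}|) · ∏_{l=1}^{m-n-1} (1 - |D_{n+l}|/|D_{n+l+1}|). -/

import Mathlib

/-!
Write `S k` for the set in question with `m = n + 1 + k`, i.e. the elements of `Γ (n+1) ∩ D m` lying
in no `D i · Γ (i+1)` with `n + 1 ≤ i < m`. The stated bound is in fact an equality, proved by
induction on `k` from `S 0 = {1}`.

For `W j = D (j+1) ∩ Γ j`, compatibility and the uniqueness of representatives say that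
multiplication is a bijection `W j × D j → D (j+1)`; hence `|W j| = |D (j+1)| / |D j|`. Left
multiplication by an element of `W j ≤ Γ j` preserves `Γ (n+1)` and, by normality, each
`D i · Γ (i+1)` with `i < j`. The remaining set `D j · Γ (j+1)` meets `D (j+1)` exactly in `D j`,
which is the translate by `v = 1`. So `S (k+1)` is the direct product of `W j \ {1}` and `S k`
(`goodSet_succ`) for `j = n + 1 + k`, and `|S (k+1)| = (|D (j+1)| / |D j| - 1) |S k|`.
-/

open Pointwise

section Counting

open Classical in
/-- The good translates: elements of `D (a + k) ∩ Γ a` that lie in none of the sets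
`D i * Γ (i + 1)` for `a ≤ i < a + k`. -/
noncomputable def goodSet {G : Type*} [Group G] (Γ : ℕ → Subgroup G) (D : ℕ → Finset G)
    (a k : ℕ) : Finset G :=
  (D (a + k)).filter fun g => g ∈ Γ a ∧
    ∀ i, a ≤ i → i < a + k → g ∉ (D i : Set G) * (Γ (i + 1) : Set G)

open Classical in
/-- The translates `D (j + 1) ∩ Γ j` by which copies of `D j` tile `D (j + 1)`. -/
noncomputable def tileSet {G : Type*} [Group G] (Γ : ℕ → Subgroup G) (D : ℕ → Finset G)
    (j : ℕ) : Finset G :=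
  (D (j + 1)).filter fun g => g ∈ Γ j

variable {G : Type*} [Group G] {Γ : ℕ → Subgroup G} {D : ℕ → Finset G}

theorem eq_of_mem_fund (hfund : ∀ n, ∀ g : G, ∃! d, d ∈ D n ∧ g⁻¹ * d ∈ Γ n)
    {n : ℕ} {d e : G} (hd : d ∈ D n) (he : e ∈ D n) (h : d⁻¹ * e ∈ Γ n) : d = e :=
  (hfund n d).unique ⟨hd, by simp⟩ ⟨he, h⟩

/-- A product of an element of `Γ n` and an element of `D n` determines both factors. -/
theorem injOn_mul (hnorm : ∀ n, (Γ n).Normal)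
    (hfund : ∀ n, ∀ g : G, ∃! d, d ∈ D n ∧ g⁻¹ * d ∈ Γ n) {n : ℕ} {v w d e : G}
    (hv : v ∈ Γ n) (hw : w ∈ Γ n) (hd : d ∈ D n) (he : e ∈ D n) (h : v * d = w * e) :
    v = w ∧ d = e := by
  have hde : d = e := by
    refine eq_of_mem_fund hfund hd he ?_
    -- `d⁻¹ e` is conjugate to `e d⁻¹ = w⁻¹ v`
    have h1 : e * d⁻¹ = w⁻¹ * v := by
      rw [mul_inv_eq_iff_eq_mul, mul_assoc, h, inv_mul_cancel_left]
    rw [(hnorm n).mem_comm_iff, h1]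
    exact (Γ n).mul_mem ((Γ n).inv_mem hw) hv
  subst hde
  exact ⟨mul_right_cancel h, rfl⟩

/-- Normality makes `A * H` invariant under left multiplication by `H`. -/
theorem mul_mem_mul_iff {H : Subgroup G} (hH : H.Normal) {A : Set G} {v u : G} (hv : v ∈ H) :
    v * u ∈ A * (H : Set G) ↔ u ∈ A * (H : Set G) := by
  have key : ∀ w ∈ H, ∀ x ∈ A * (H : Set G), w * x ∈ A * (H : Set G) := by
    rintro w hw x ⟨a, ha, γ, hγ, rfl⟩
    refine ⟨a, ha, a⁻¹ * w * a * γ, H.mul_mem ?_ hγ, by group⟩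
    simpa using hH.conj_mem w hw a⁻¹
  refine ⟨fun h => ?_, key v hv u⟩
  simpa using key v⁻¹ (H.inv_mem hv) _ h

theorem mem_succ_iff
    (hcompat : ∀ i j, i < j →
      (D j : Set G) = ⋃ v ∈ (D j : Set G) ∩ (Γ i : Set G), v • (D i : Set G))
    {j : ℕ} {g : G} : g ∈ D (j + 1) ↔ ∃ v ∈ tileSet Γ D j, ∃ u ∈ D j, v * u = g := by
  rw [← Finset.mem_coe, hcompat j (j + 1) j.lt_succ_self]
  simp [tileSet, Set.mem_smul_set]

open Classical in
theorem card_succ (hnorm : ∀ n, (Γ n).Normal)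
    (hfund : ∀ n, ∀ g : G, ∃! d, d ∈ D n ∧ g⁻¹ * d ∈ Γ n)
    (hcompat : ∀ i j, i < j →
      (D j : Set G) = ⋃ v ∈ (D j : Set G) ∩ (Γ i : Set G), v • (D i : Set G)) (j : ℕ) :
    (D (j + 1)).card = (tileSet Γ D j).card * (D j).card := by
  have h : D (j + 1) = tileSet Γ D j * D j := by
    ext g
    rw [mem_succ_iff hcompat, Finset.mem_mul]
  rw [h, Finset.card_mul_iff]
  rintro ⟨v, d⟩ ⟨hv, hd⟩ ⟨w, e⟩ ⟨hw, he⟩ hvw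
  have := injOn_mul hnorm hfund (Finset.mem_filter.1 hv).2 (Finset.mem_filter.1 hw).2 hd he hvw
  exact Prod.ext this.1 this.2

theorem goodSet_zero (hDone : ∀ n, (1 : G) ∈ D n)
    (hfund : ∀ n, ∀ g : G, ∃! d, d ∈ D n ∧ g⁻¹ * d ∈ Γ n) (a : ℕ) :
    goodSet Γ D a 0 = {1} := by
  ext g
  simp only [goodSet, Finset.mem_filter, Finset.mem_singleton, add_zero]
  constructor
  · rintro ⟨hg, hgΓ, -⟩
    exact (eq_of_mem_fund hfund (hDone a) hg (by simpa using hgΓ)).symm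
  · rintro rfl
    exact ⟨hDone a, (Γ a).one_mem, fun i h1 h2 => absurd h1 h2.not_ge⟩

open Classical in
theorem goodSet_succ (hnorm : ∀ n, (Γ n).Normal) (hdec : ∀ n, Γ (n + 1) ≤ Γ n)
    (hDmono : ∀ n, D n ⊆ D (n + 1))
    (hfund : ∀ n, ∀ g : G, ∃! d, d ∈ D n ∧ g⁻¹ * d ∈ Γ n)
    (hcompat : ∀ i j, i < j →
      (D j : Set G) = ⋃ v ∈ (D j : Set G) ∩ (Γ i : Set G), v • (D i : Set G)) (a k : ℕ) :
    goodSet Γ D a (k + 1) = (tileSet Γ D (a + k)).erase 1 * goodSet Γ D a k := by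
  have hanti : Antitone Γ := antitone_nat_of_succ_le hdec
  ext g
  simp only [Finset.mem_mul, Finset.mem_erase]
  constructor
  · intro hg
    obtain ⟨hgD, hgΓ, hgi⟩ := Finset.mem_filter.1 hg
    obtain ⟨v, hv, u, hu, rfl⟩ := (mem_succ_iff hcompat).1 hgD
    have hvΓ : v ∈ Γ (a + k) := (Finset.mem_filter.1 hv).2
    refine ⟨v, ⟨?_, hv⟩, u, Finset.mem_filter.2 ⟨hu, ?_, fun i hi hik => ?_⟩, rfl⟩
    · rintro rfl
      exact hgi (a + k) (by omega) (by omega) ⟨u, hu, 1, (Γ _).one_mem, by simp⟩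
    · exact ((Γ a).mul_mem_cancel_left (hanti (by omega) hvΓ)).1 hgΓ
    · have := hgi i hi (by omega)
      rwa [mul_mem_mul_iff (hnorm _) (hanti (by omega) hvΓ)] at this
  · rintro ⟨v, ⟨hv1, hv⟩, u, hu, rfl⟩
    obtain ⟨huD, huΓ, hui⟩ := Finset.mem_filter.1 hu
    have hvΓ : v ∈ Γ (a + k) := (Finset.mem_filter.1 hv).2
    have hvu : v * u ∈ D (a + k + 1) := (mem_succ_iff hcompat).2 ⟨v, hv, u, huD, rfl⟩
    refine Finset.mem_filter.2
      ⟨hvu, (Γ a).mul_mem (hanti (by omega) hvΓ) huΓ, fun i hi hik => ?_⟩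
    rcases Nat.lt_or_ge i (a + k) with h | h
    · rw [mul_mem_mul_iff (hnorm _) (hanti (by omega) hvΓ)]
      exact hui i hi h
    · obtain rfl : i = a + k := by omega
      rintro ⟨d, hd, γ, hγ, hdγ⟩
      have hdγ : d * γ = v * u := hdγ
      -- both `d` and `v u` lie in `D (j+1)` and agree modulo `Γ (j+1)`
      have h2 : d = v * u := eq_of_mem_fund hfund (hDmono _ hd) hvu (by simpa [← hdγ] using hγ)
      exact hv1 (injOn_mul hnorm hfund hvΓ (Γ _).one_mem huD hd (by rw [one_mul, h2])).1

theorem card_goodSet (hnorm : ∀ n, (Γ n).Normal) (hdec : ∀ n, Γ (n + 1) ≤ Γ n)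
    (hDone : ∀ n, (1 : G) ∈ D n) (hDmono : ∀ n, D n ⊆ D (n + 1))
    (hfund : ∀ n, ∀ g : G, ∃! d, d ∈ D n ∧ g⁻¹ * d ∈ Γ n)
    (hcompat : ∀ i j, i < j →
      (D j : Set G) = ⋃ v ∈ (D j : Set G) ∩ (Γ i : Set G), v • (D i : Set G)) (a k : ℕ) :
    ((goodSet Γ D a k).card : ℝ) = ((D (a + k)).card : ℝ) / ((D a).card : ℝ) *
      ∏ l ∈ Finset.range k, (1 - ((D (a + l)).card : ℝ) / ((D (a + l + 1)).card : ℝ)) := by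
  classical
  have hpos : ∀ j, ((D j).card : ℝ) ≠ 0 := fun j =>
    Nat.cast_ne_zero.2 (Finset.card_ne_zero_of_mem (hDone j))
  induction k with
  | zero => simp [goodSet_zero hDone hfund, hpos]
  | succ k ih =>
    have h1 : (1 : G) ∈ tileSet Γ D (a + k) :=
      Finset.mem_filter.2 ⟨hDone _, (Γ _).one_mem⟩
    have hcard : (goodSet Γ D a (k + 1)).card =
        ((tileSet Γ D (a + k)).erase 1).card * (goodSet Γ D a k).card := by
      rw [goodSet_succ hnorm hdec hDmono hfund hcompat, Finset.card_mul_iff]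
      rintro ⟨v, d⟩ ⟨hv, hd⟩ ⟨w, e⟩ ⟨hw, he⟩ hvw
      have := injOn_mul hnorm hfund (Finset.mem_filter.1 (Finset.mem_of_mem_erase hv)).2
        (Finset.mem_filter.1 (Finset.mem_of_mem_erase hw)).2
        (Finset.mem_filter.1 hd).1 (Finset.mem_filter.1 he).1 hvw
      exact Prod.ext this.1 this.2
    have hW : ((D (a + k + 1)).card : ℝ) = (tileSet Γ D (a + k)).card * (D (a + k)).card := by
      exact_mod_cast card_succ hnorm hfund hcompat (a + k)
    have hW0 : ((tileSet Γ D (a + k)).card : ℝ) ≠ 0 :=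
      Nat.cast_ne_zero.2 (Finset.card_ne_zero_of_mem h1)
    have hE : (((tileSet Γ D (a + k)).erase 1).card : ℝ) = (tileSet Γ D (a + k)).card - 1 := by
      rw [← Finset.card_erase_add_one h1]
      push_cast
      ring
    have hj := hpos (a + k)
    have ha := hpos a
    rw [hcard, Nat.cast_mul, hE, ih, Finset.prod_range_succ, ← add_assoc, hW]
    field_simp

end Counting

/-- For `m ≥ n+2`, the set `(Γ (n+1) ∩ D m) \\ (D (n+1)·Γ (n+2) ∪ ⋯ ∪ D (m-1)·Γ m)` has cardinality at least `(|D m|/|D (n+1)|) ∏_{l=1}^{m-n-1} (1 - |D (n+l)|/|D (n+l+1)|)`. -/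
theorem card_good_translates_lower_bound {G : Type*} [Group G]
    (Γ : ℕ → Subgroup G)
    (hnorm : ∀ n, (Γ n).Normal)
    (hfin : ∀ n, (Γ n).FiniteIndex)
    (hdec : ∀ n, Γ (n + 1) ≤ Γ n)
    (D : ℕ → Finset G)
    (hD0 : D 0 = {1})
    (hDone : ∀ n, (1 : G) ∈ D n)
    (hDmono : ∀ n, D n ⊆ D (n + 1))
    (hfund : ∀ n, ∀ g : G, ∃! d, d ∈ D n ∧ g⁻¹ * d ∈ Γ n)
    (hcompat : ∀ i j, i < j →
      (D j : Set G) = ⋃ v ∈ (D j : Set G) ∩ (Γ i : Set G), v • (D i : Set G))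
    :
    ∀ n m : ℕ, n + 2 ≤ m →
      ((D m).card : ℝ) / ((D (n + 1)).card : ℝ) *
          ∏ l ∈ Finset.Icc 1 (m - n - 1), (1 - ((D (n + l)).card : ℝ) / ((D (n + l + 1)).card : ℝ)) ≤
        (Nat.card (((Γ (n + 1) : Set G) ∩ (D m : Set G)) \
          ⋃ i ∈ Finset.Icc (n + 1) (m - 1), (D i : Set G) * (Γ (i + 1) : Set G) : Set G) : ℝ) := by
  intro n m hnm
  obtain ⟨k, rfl⟩ : ∃ k, m = n + 1 + k := ⟨m - (n + 1), by omega⟩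
  have hset : (((Γ (n + 1) : Set G) ∩ (D (n + 1 + k) : Set G)) \
      ⋃ i ∈ Finset.Icc (n + 1) (n + 1 + k - 1), (D i : Set G) * (Γ (i + 1) : Set G) : Set G) =
      (goodSet Γ D (n + 1) k : Set G) := by
    ext g
    simp only [goodSet, Finset.coe_filter, Set.mem_sdiff, Set.mem_inter_iff, Set.mem_iUnion,
      Set.mem_ofPred_eq, SetLike.mem_coe, Finset.mem_Icc, not_exists]
    constructor
    · rintro ⟨⟨h1, h2⟩, h3⟩
      exact ⟨h2, h1, fun i hi hik => h3 i ⟨hi, by omega⟩⟩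
    · rintro ⟨h2, h1, h3⟩
      exact ⟨⟨h1, h2⟩, fun i hi => h3 i hi.1 (by omega)⟩
  have hprod : ∏ l ∈ Finset.Icc 1 (n + 1 + k - n - 1),
        (1 - ((D (n + l)).card : ℝ) / ((D (n + l + 1)).card : ℝ)) =
      ∏ l ∈ Finset.range k,
        (1 - ((D (n + 1 + l)).card : ℝ) / ((D (n + 1 + l + 1)).card : ℝ)) := by
    rw [show n + 1 + k - n - 1 = k by omega, ← Finset.Ico_add_one_right_eq_Icc,
      Finset.prod_Ico_eq_prod_range]
    simp only [Nat.add_sub_cancel, ← add_assoc]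
  rw [hset, hprod, ← card_goodSet hnorm hdec hDone hDmono hfund hcompat (n + 1) k]
  simp
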